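/- In dimension d ≥ 4, nonempty intersections of two wedges are unbounded: if W₁ = Λ₁(W_R) + a₁ and W₂ = Λ₂(W_R) + a₂ are wedges in ℝ^d with d ≥ 4 and W₁ ∩ W₂ ≠ ∅, then W₁ ∩ W₂ is not a bounded set. -/

import Mathlib

/-- The Minkowski inner product on `ℝ^(d+4)`:
`⟨x,y⟩ = x₀y₀ - x₁y₁ - ⋯ = 2 x₀ y₀ - ∑ᵢ xᵢ yᵢ`. -/
noncomputable def mink {d : ℕ} (x y : Fin (d + 4) → ℝ) : ℝ :=
  2 * x 0 * y 0 - ∑ i, x i * y i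

/-- The right wedge `W_R = {x : x₁ > |x₀|}` in `ℝ^(d+4)`. -/
def WR {d : ℕ} : Set (Fin (d + 4) → ℝ) := {x | |x 0| < x 1}

/-!
The intersection of two wedges is cut out by four strict linear inequalities `c i < f i x`. In
dimension at least four, either the `f i` have a common nonzero kernel vector, or
`x ↦ (f i x)ᵢ` is bijective and the `f i` are all equal to `1` at some vector. In both cases there
is a direction `v ≠ 0` along which no `f i` decreases, so the intersection contains a whole ray in
direction `v` from each of its points.
-/

open Bornology Filter Module

section HalfSpaces

variable {ι : Type*} [Finite ι]

theorem exists_ne_zero_forall_nonneg_of_card_le_rank {K V : Type*} [Field K] [LinearOrder K]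
    [IsStrictOrderedRing K] [AddCommGroup V] [Module K V] [Nontrivial V] (f : ι → Dual K V)
    (hcard : (Nat.card ι : Cardinal) ≤ Module.rank K V) : ∃ v ≠ 0, ∀ i, 0 ≤ f i v := by
  let F : V →ₗ[K] ι → K := LinearMap.pi f
  by_cases hinj : Function.Injective F
  · have : FiniteDimensional K V := .of_injective F hinj
    have hle : finrank K (ι → K) ≤ finrank K V := by
      rw [← finrank_eq_rank, Nat.cast_le] at hcard
      have := Fintype.ofFinite ι
      rwa [finrank_fintype_fun_eq_card, ← Nat.card_eq_fintype_card]
    have hdim : finrank K V = finrank K (ι → K) :=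
      (LinearMap.finrank_le_finrank_of_injective hinj).antisymm hle
    obtain ⟨v, hv⟩ := (LinearMap.injective_iff_surjective_of_finrank_eq_finrank hdim).1 hinj 1
    have : Nontrivial (ι → K) := hinj.nontrivial
    refine ⟨v, ?_, fun i => zero_le_one.trans_eq (congrFun hv i).symm⟩
    rintro rfl
    exact zero_ne_one (F.map_zero.symm.trans hv)
  · rw [injective_iff_map_eq_zero] at hinj
    push Not at hinj
    obtain ⟨v, hv, hv0⟩ := hinj
    exact ⟨v, hv0, fun i => (congrFun hv i).ge⟩

variable {E : Type*} [NormedAddCommGroup E] [NormedSpace ℝ E]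

theorem tendsto_add_smul_atTop_cobounded (p : E) {v : E} (hv : v ≠ 0) :
    Tendsto (fun t : ℝ => p + t • v) atTop (cobounded E) := by
  refine (tendsto_const_add_cobounded p).comp (tendsto_norm_atTop_iff_cobounded.1 ?_)
  simp only [norm_smul]
  exact tendsto_norm_atTop_atTop.atTop_mul_const (norm_pos_iff.2 hv)

theorem not_isBounded_of_forall_add_smul_mem {s : Set E} {p v : E} (hv : v ≠ 0)
    (h : ∀ t : ℝ, 0 ≤ t → p + t • v ∈ s) : ¬ IsBounded s := fun hs =>
  have hout := (tendsto_add_smul_atTop_cobounded p hv).eventually hs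
  have ⟨t, htout, ht⟩ := (hout.and (eventually_ge_atTop 0)).exists
  htout (h t ht)

theorem not_isBounded_setOf_forall_lt [Nontrivial E] (f : ι → Dual ℝ E) (c : ι → ℝ)
    (hcard : (Nat.card ι : Cardinal) ≤ Module.rank ℝ E) (hne : {x | ∀ i, c i < f i x}.Nonempty) :
    ¬ IsBounded {x | ∀ i, c i < f i x} := by
  obtain ⟨p, hp⟩ := hne
  obtain ⟨v, hv0, hv⟩ := exists_ne_zero_forall_nonneg_of_card_le_rank f hcard
  refine not_isBounded_of_forall_add_smul_mem (p := p) hv0 fun t ht i => ?_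
  rw [map_add, map_smul]
  exact lt_add_of_lt_of_nonneg (hp i) (mul_nonneg ht (hv i))

end HalfSpaces

/-- The null coordinates `x₁ - x₀` and `x₁ + x₀`, whose joint positivity defines the right wedge. -/
def nullCoord {d : ℕ} : Fin 2 → Dual ℝ (Fin (d + 4) → ℝ) :=
  ![.proj 1 - .proj 0, .proj 1 + .proj 0]

theorem mem_WR_iff_forall_nullCoord_pos {d : ℕ} {x : Fin (d + 4) → ℝ} :
    x ∈ WR ↔ ∀ i, 0 < nullCoord i x := by
  simp [WR, nullCoord, Fin.forall_fin_two, abs_lt, neg_lt_iff_pos_add', and_comm]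

theorem image_WR_eq_setOf_nullCoord_lt {d : ℕ} (Λ : (Fin (d + 4) → ℝ) ≃ₗ[ℝ] (Fin (d + 4) → ℝ))
    (a : Fin (d + 4) → ℝ) :
    (fun w => Λ w + a) '' WR = {x | ∀ i, nullCoord i (Λ.symm a) < nullCoord i (Λ.symm x)} := by
  have himage : (fun w => Λ w + a) '' WR = {x | Λ.symm (x - a) ∈ WR} := by
    simpa [sub_eq_add_neg, Set.preimage] using
      (Λ.toEquiv.trans (Equiv.addRight a)).image_eq_preimage_symm WR
  simp only [himage, mem_WR_iff_forall_nullCoord_pos, map_sub, sub_pos]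

theorem wedge_intersection_unbounded_general (d : ℕ)
    (Λ₁ Λ₂ : (Fin (d + 4) → ℝ) ≃ₗ[ℝ] (Fin (d + 4) → ℝ)) (a₁ a₂ : Fin (d + 4) → ℝ)
    (hne : (((fun w => Λ₁ w + a₁) '' WR) ∩ ((fun w => Λ₂ w + a₂) '' WR)).Nonempty) :
    ¬ IsBounded (((fun w => Λ₁ w + a₁) '' WR) ∩ ((fun w => Λ₂ w + a₂) '' WR)) := by
  let f : Fin 2 ⊕ Fin 2 → Dual ℝ (Fin (d + 4) → ℝ) :=
    Sum.elim (fun i => nullCoord i ∘ₗ Λ₁.symm.toLinearMap)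
      (fun i => nullCoord i ∘ₗ Λ₂.symm.toLinearMap)
  let c : Fin 2 ⊕ Fin 2 → ℝ :=
    Sum.elim (fun i => nullCoord i (Λ₁.symm a₁)) (fun i => nullCoord i (Λ₂.symm a₂))
  have hinter : ((fun w => Λ₁ w + a₁) '' WR) ∩ ((fun w => Λ₂ w + a₂) '' WR) =
      {x | ∀ i, c i < f i x} := by
    ext x
    simp [image_WR_eq_setOf_nullCoord_lt, f, c]
  have hcard : (Nat.card (Fin 2 ⊕ Fin 2) : Cardinal) ≤ Module.rank ℝ (Fin (d + 4) → ℝ) := by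
    rw [← finrank_eq_rank, Nat.cast_le]
    simp
  rw [hinter] at hne ⊢
  exact not_isBounded_setOf_forall_lt f c hcard hne

/-- in dimension `d ≥ 4`, nonempty intersections of two wedges are unbounded:
if `W₁ = Λ₁(W_R) + a₁` and `W₂ = Λ₂(W_R) + a₂` are wedges with `W₁ ∩ W₂ ≠ ∅`, then `W₁ ∩ W₂`
is not a bounded set. -/
theorem wedge_intersection_unbounded (d : ℕ)
    (Λ₁ Λ₂ : (Fin (d + 4) → ℝ) →ₗ[ℝ] (Fin (d + 4) → ℝ))
    (h₁bij : Function.Bijective Λ₁)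
    (h₁mink : ∀ x y, mink (Λ₁ x) (Λ₁ y) = mink x y)
    (h₁det : LinearMap.det Λ₁ = 1)
    (h₂bij : Function.Bijective Λ₂)
    (h₂mink : ∀ x y, mink (Λ₂ x) (Λ₂ y) = mink x y)
    (h₂det : LinearMap.det Λ₂ = 1)
    (a₁ a₂ : Fin (d + 4) → ℝ)
    (hne : (((fun w => Λ₁ w + a₁) '' WR) ∩ ((fun w => Λ₂ w + a₂) '' WR)).Nonempty) :
    ¬ Bornology.IsBounded (((fun w => Λ₁ w + a₁) '' WR) ∩ ((fun w => Λ₂ w + a₂) '' WR)) :=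
  wedge_intersection_unbounded_general d (.ofBijective Λ₁ h₁bij) (.ofBijective Λ₂ h₂bij) a₁ a₂ hne
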